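/- For two d-dimensional Gaussian measures with common mean μ and covariances c₁Σ and c₂Σ, where Σ is symmetric positive definite and c₁, c₂ > 0, the total variation distance is bounded: d_TV(N_d(μ, c₁Σ), N_d(μ, c₂Σ)) ≤ C · |c₁/c₂ - 1| · √d for an absolute constant C > 0, provided |c₁/c₂ - 1| ≤ 1/2. -/

import Mathlib

open MeasureTheory Real Matrix

noncomputable def dTV {Ω : Type*} [MeasurableSpace Ω] (P Q : Measure Ω) : ℝ :=
  ⨆ A : {A : Set Ω // MeasurableSet A}, |(P A).toReal - (Q A).toReal|

/-- Gaussian measure on `Fin d → ℝ` with mean `μ` and covariance `S`, defined via density. -/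
noncomputable def gaussMeasure (d : ℕ) (μ : Fin d → ℝ) (S : Matrix (Fin d) (Fin d) ℝ) :
    Measure (Fin d → ℝ) :=
  volume.withDensity fun θ =>
    ENNReal.ofReal ((2 * π) ^ (-(d : ℝ) / 2) * S.det ^ (-(1 : ℝ) / 2) *
      Real.exp (-(1 / 2) * ((θ - μ) ⬝ᵥ S⁻¹.mulVec (θ - μ))))

/-!
The total variation distance is controlled by the Bhattacharyya coefficient `B` of two densities:
Cauchy–Schwarz applied to `|f - g| = |√f - √g| (√f + √g)` gives Le Cam's inequality
`dTV ≤ √(1 - B²)`. For Gaussians with a common mean the product of the square roots of the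
densities is again a Gaussian function, so `B² = √(det S * det T) / det ((S + T) / 2)`. For
`S = c₁ Σ` and `T = c₂ Σ` this is the `d`-th power of the ratio of the geometric mean of `c₁` and
`c₂` to their arithmetic mean, and Bernoulli's inequality bounds `1 - B²` linearly in `d`.
-/

section TotalVariation

variable {Ω : Type*} [MeasurableSpace Ω] {ν : Measure Ω} {f g u v : Ω → ℝ}

lemma sq_integral_abs_mul_le (hu : MemLp u 2 ν) (hv : MemLp v 2 ν) :
    (∫ x, |u x * v x| ∂ν) ^ 2 ≤ (∫ x, u x ^ 2 ∂ν) * ∫ x, v x ^ 2 ∂ν := by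
  have hu0 : 0 ≤ ∫ x, u x ^ 2 ∂ν := integral_nonneg fun x => sq_nonneg (u x)
  have hv0 : 0 ≤ ∫ x, v x ^ 2 ∂ν := integral_nonneg fun x => sq_nonneg (v x)
  have holder : ∫ x, |u x * v x| ∂ν ≤ √(∫ x, u x ^ 2 ∂ν) * √(∫ x, v x ^ 2 ∂ν) := by
    have h := integral_mul_norm_le_Lp_mul_Lq (μ := ν) (f := u) (g := v)
      Real.HolderConjugate.two_two (by simpa using hu) (by simpa using hv)
    simpa [abs_mul, Real.sqrt_eq_rpow] using h
  calc (∫ x, |u x * v x| ∂ν) ^ 2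
      ≤ (√(∫ x, u x ^ 2 ∂ν) * √(∫ x, v x ^ 2 ∂ν)) ^ 2 := by gcongr
    _ = (∫ x, u x ^ 2 ∂ν) * ∫ x, v x ^ 2 ∂ν := by
      rw [mul_pow, Real.sq_sqrt hu0, Real.sq_sqrt hv0]

lemma two_mul_abs_setIntegral_le_integral_abs (hf : Integrable f ν) (hf0 : ∫ x, f x ∂ν = 0)
    {A : Set Ω} (hA : MeasurableSet A) :
    2 * |∫ x in A, f x ∂ν| ≤ ∫ x, |f x| ∂ν := by
  have hcompl : ∫ x in Aᶜ, f x ∂ν = -∫ x in A, f x ∂ν := by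
    linarith [integral_add_compl hA hf]
  calc 2 * |∫ x in A, f x ∂ν|
      = |∫ x in A, f x ∂ν| + |∫ x in Aᶜ, f x ∂ν| := by rw [hcompl, abs_neg, two_mul]
    _ ≤ (∫ x in A, |f x| ∂ν) + ∫ x in Aᶜ, |f x| ∂ν :=
      add_le_add abs_integral_le_integral_abs abs_integral_le_integral_abs
    _ = ∫ x, |f x| ∂ν := integral_add_compl hA hf.abs

lemma toReal_withDensity_ofReal_apply (hf : Integrable f ν) (hf0 : 0 ≤ᵐ[ν] f) {A : Set Ω}
    (hA : MeasurableSet A) :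
    (ν.withDensity (fun x => ENNReal.ofReal (f x)) A).toReal = ∫ x in A, f x ∂ν := by
  have hf0A : 0 ≤ᵐ[ν.restrict A] f := ae_restrict_of_ae hf0
  rw [withDensity_apply _ hA, ← ofReal_integral_eq_lintegral_ofReal hf.integrableOn hf0A,
    ENNReal.toReal_ofReal (integral_nonneg_of_ae hf0A)]

lemma dTV_withDensity_ofReal_le_half_integral_abs_sub (hf : Integrable f ν) (hg : Integrable g ν)
    (hf0 : 0 ≤ᵐ[ν] f) (hg0 : 0 ≤ᵐ[ν] g) (hfg : ∫ x, f x ∂ν = ∫ x, g x ∂ν) :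
    dTV (ν.withDensity fun x => ENNReal.ofReal (f x))
      (ν.withDensity fun x => ENNReal.ofReal (g x)) ≤ (∫ x, |f x - g x| ∂ν) / 2 := by
  have : Nonempty {A : Set Ω // MeasurableSet A} := ⟨∅, MeasurableSet.empty⟩
  refine ciSup_le fun ⟨A, hA⟩ => ?_
  rw [toReal_withDensity_ofReal_apply hf hf0 hA, toReal_withDensity_ofReal_apply hg hg0 hA,
    ← integral_sub hf.integrableOn hg.integrableOn, le_div_iff₀' two_pos]
  exact two_mul_abs_setIntegral_le_integral_abs (hf.sub hg)
    (by rw [integral_sub' hf hg, hfg, sub_self]) hA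

/-- The Bhattacharyya coefficient (Hellinger affinity) `∫ √(f g) dν` of two densities `f`, `g` with
respect to `ν`, with the square root taken factorwise. -/
noncomputable def bhattacharyyaCoeff (ν : Measure Ω) (f g : Ω → ℝ) : ℝ :=
  ∫ x, √(f x) * √(g x) ∂ν

lemma memLp_two_sqrt (hf : Integrable f ν) (hf0 : 0 ≤ᵐ[ν] f) : MemLp (fun x => √(f x)) 2 ν := by
  have hmeas : AEStronglyMeasurable (fun x => √(f x)) ν :=
    Real.continuous_sqrt.comp_aestronglyMeasurable hf.aestronglyMeasurable
  refine (memLp_two_iff_integrable_sq hmeas).2 (hf.congr ?_)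
  filter_upwards [hf0] with x hx using (Real.sq_sqrt hx).symm

lemma integral_sqrt_add_const_mul_sqrt_sq (hf : Integrable f ν) (hg : Integrable g ν)
    (hf0 : 0 ≤ᵐ[ν] f) (hg0 : 0 ≤ᵐ[ν] g) (c : ℝ) :
    ∫ x, (√(f x) + c * √(g x)) ^ 2 ∂ν =
      (∫ x, f x ∂ν) + c ^ 2 * (∫ x, g x ∂ν) + 2 * c * bhattacharyyaCoeff ν f g := by
  have hfg : Integrable (fun x => √(f x) * √(g x)) ν :=
    (memLp_two_sqrt hf hf0).integrable_mul (memLp_two_sqrt hg hg0)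
  have hfg' : Integrable (fun x => f x + c ^ 2 * g x) ν := hf.add (hg.const_mul _)
  have hexpand : (fun x => (√(f x) + c * √(g x)) ^ 2) =ᵐ[ν]
      fun x => f x + c ^ 2 * g x + 2 * c * (√(f x) * √(g x)) := by
    filter_upwards [hf0, hg0] with x hfx hgx
    rw [add_sq, mul_pow, Real.sq_sqrt hfx, Real.sq_sqrt hgx]
    ring
  rw [integral_congr_ae hexpand, integral_add hfg' (hfg.const_mul _),
    integral_add hf (hg.const_mul _), integral_const_mul, integral_const_mul, bhattacharyyaCoeff]

lemma sq_integral_abs_sub_le (hf : Integrable f ν) (hg : Integrable g ν) (hf0 : 0 ≤ᵐ[ν] f)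
    (hg0 : 0 ≤ᵐ[ν] g) :
    (∫ x, |f x - g x| ∂ν) ^ 2 ≤
      ((∫ x, f x ∂ν) + ∫ x, g x ∂ν) ^ 2 - 4 * bhattacharyyaCoeff ν f g ^ 2 := by
  have hL2 (c : ℝ) : MemLp (fun x => √(f x) + c * √(g x)) 2 ν :=
    (memLp_two_sqrt hf hf0).add ((memLp_two_sqrt hg hg0).const_mul c)
  have hfactor : (fun x => |f x - g x|) =ᵐ[ν]
      fun x => |(√(f x) + -1 * √(g x)) * (√(f x) + 1 * √(g x))| := by
    filter_upwards [hf0, hg0] with x hfx hgx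
    congr 1
    linear_combination -Real.sq_sqrt hfx + Real.sq_sqrt hgx
  calc (∫ x, |f x - g x| ∂ν) ^ 2
      = (∫ x, |(√(f x) + -1 * √(g x)) * (√(f x) + 1 * √(g x))| ∂ν) ^ 2 := by
        rw [integral_congr_ae hfactor]
    _ ≤ (∫ x, (√(f x) + -1 * √(g x)) ^ 2 ∂ν) * ∫ x, (√(f x) + 1 * √(g x)) ^ 2 ∂ν :=
        sq_integral_abs_mul_le (hL2 (-1)) (hL2 1)
    _ = ((∫ x, f x ∂ν) + ∫ x, g x ∂ν) ^ 2 - 4 * bhattacharyyaCoeff ν f g ^ 2 := by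
        rw [integral_sqrt_add_const_mul_sqrt_sq hf hg hf0 hg0,
          integral_sqrt_add_const_mul_sqrt_sq hf hg hf0 hg0]
        ring

lemma dTV_withDensity_ofReal_le_sqrt_one_sub_sq (hf : Integrable f ν) (hg : Integrable g ν)
    (hf0 : 0 ≤ᵐ[ν] f) (hg0 : 0 ≤ᵐ[ν] g) (hf1 : ∫ x, f x ∂ν = 1) (hg1 : ∫ x, g x ∂ν = 1) :
    dTV (ν.withDensity fun x => ENNReal.ofReal (f x))
      (ν.withDensity fun x => ENNReal.ofReal (g x)) ≤ √(1 - bhattacharyyaCoeff ν f g ^ 2) := by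
  refine (dTV_withDensity_ofReal_le_half_integral_abs_sub hf hg hf0 hg0 (hf1.trans hg1.symm)).trans
    (Real.le_sqrt_of_sq_le ?_)
  have h := sq_integral_abs_sub_le hf hg hf0 hg0
  rw [hf1, hg1] at h
  linarith

end TotalVariation

lemma sqrt_pow_of_nonneg {a : ℝ} (ha : 0 ≤ a) (k : ℕ) : √(a ^ k) = √a ^ k := by
  simpa using Real.sqrt_prod (Finset.range k) (x := fun _ => a) fun _ _ => ha

section Gaussian

variable {n : Type*} [Fintype n]

lemma integral_exp_neg_half_dotProduct_self :
    ∫ x : n → ℝ, Real.exp (-(1 / 2) * (x ⬝ᵥ x)) = √((2 * π) ^ Fintype.card n) := by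
  have hprod (x : n → ℝ) :
      Real.exp (-(1 / 2) * (x ⬝ᵥ x)) = ∏ i, Real.exp (-(1 / 2) * x i ^ 2) := by
    simp only [← Real.exp_sum, dotProduct, Finset.mul_sum, sq]
  simp_rw [hprod]
  rw [integral_fintype_prod_volume_eq_pow fun t : ℝ => Real.exp (-(1 / 2) * t ^ 2),
    integral_gaussian, show π / (1 / 2) = 2 * π by ring,
    sqrt_pow_of_nonneg (by positivity)]

open scoped MatrixOrder Matrix.Norms.L2Operator in
lemma exists_eq_transpose_mul_self_of_posSemidef {M : Matrix n n ℝ} (hM : M.PosSemidef) :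
    ∃ B : Matrix n n ℝ, M = Bᵀ * B := by
  classical
  obtain ⟨B, hB⟩ := CStarAlgebra.nonneg_iff_eq_star_mul_self.mp hM.nonneg
  exact ⟨B, by rwa [star_eq_conjTranspose, conjTranspose_eq_transpose_of_trivial] at hB⟩

variable [DecidableEq n]

lemma integral_comp_mulVec {E : Type*} [NormedAddCommGroup E] [NormedSpace ℝ E]
    {B : Matrix n n ℝ} (hB : B.det ≠ 0) (f : (n → ℝ) → E) :
    ∫ x, f (B *ᵥ x) = |B.det|⁻¹ • ∫ x, f x := by
  have hdet : LinearMap.det (toLin' B) ≠ 0 := by rwa [LinearMap.det_toLin']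
  have hemb : MeasurableEmbedding (toLin' B) :=
    (LinearMap.equivOfDetNeZero _ hdet).toContinuousLinearEquiv.toHomeomorph.measurableEmbedding
  have hmap := hemb.integral_map (μ := volume) f
  rw [Real.map_matrix_volume_pi_eq_smul_volume_pi hB, integral_smul_measure,
    ENNReal.toReal_ofReal (abs_nonneg _), abs_inv] at hmap
  exact hmap.symm

lemma integral_exp_neg_half_dotProduct_mulVec {M : Matrix n n ℝ} (hM : M.PosDef) (μ : n → ℝ) :
    ∫ x : n → ℝ, Real.exp (-(1 / 2) * ((x - μ) ⬝ᵥ M *ᵥ (x - μ))) =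
      √((2 * π) ^ Fintype.card n / M.det) := by
  obtain ⟨B, rfl⟩ := exists_eq_transpose_mul_self_of_posSemidef hM.posSemidef
  have hdet : (Bᵀ * B).det = B.det ^ 2 := by rw [det_mul, det_transpose, sq]
  have hB : B.det ≠ 0 := fun h => hM.det_pos.ne' (by rw [hdet, h, zero_pow two_ne_zero])
  have hquad (x : n → ℝ) : x ⬝ᵥ (Bᵀ * B) *ᵥ x = (B *ᵥ x) ⬝ᵥ (B *ᵥ x) := by
    rw [← mulVec_mulVec, dotProduct_mulVec, vecMul_transpose]
  calc ∫ x : n → ℝ, Real.exp (-(1 / 2) * ((x - μ) ⬝ᵥ (Bᵀ * B) *ᵥ (x - μ)))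
      = ∫ x : n → ℝ, Real.exp (-(1 / 2) * (x ⬝ᵥ (Bᵀ * B) *ᵥ x)) :=
        integral_sub_right_eq_self
          (fun x : n → ℝ => Real.exp (-(1 / 2) * (x ⬝ᵥ (Bᵀ * B) *ᵥ x))) μ
    _ = |B.det|⁻¹ * √((2 * π) ^ Fintype.card n) := by
        simp_rw [hquad]
        rw [integral_comp_mulVec hB fun y : n → ℝ => Real.exp (-(1 / 2) * (y ⬝ᵥ y)),
          integral_exp_neg_half_dotProduct_self, smul_eq_mul]
    _ = √((2 * π) ^ Fintype.card n / (Bᵀ * B).det) := by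
        rw [hdet, Real.sqrt_div' _ (sq_nonneg _), Real.sqrt_sq_eq_abs, inv_mul_eq_div]

/-- The density of the Gaussian measure with mean `μ` and covariance `S` on `n → ℝ`. The
normalizing constant is written with a square root instead of the real powers of `gaussMeasure`;
see `gaussMeasure_eq_withDensity`. -/
noncomputable def gaussDensity (μ : n → ℝ) (S : Matrix n n ℝ) (x : n → ℝ) : ℝ :=
  (√((2 * π) ^ Fintype.card n * S.det))⁻¹ *
    Real.exp (-(1 / 2) * ((x - μ) ⬝ᵥ S⁻¹ *ᵥ (x - μ)))

lemma gaussMeasure_eq_withDensity {d : ℕ} (μ : Fin d → ℝ) {S : Matrix (Fin d) (Fin d) ℝ}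
    (hS : S.PosDef) :
    gaussMeasure d μ S = volume.withDensity fun x => ENNReal.ofReal (gaussDensity μ S x) := by
  have h2π : (2 * π) ^ (-(d : ℝ) / 2) = (√((2 * π) ^ d))⁻¹ := by
    rw [neg_div, Real.rpow_neg (by positivity), ← Real.rpow_natCast, Real.sqrt_eq_rpow,
      ← Real.rpow_mul (by positivity), mul_one_div]
  have hdet : S.det ^ (-(1 : ℝ) / 2) = (√S.det)⁻¹ := by
    rw [neg_div, Real.rpow_neg hS.det_pos.le, Real.sqrt_eq_rpow]
  simp only [gaussMeasure, gaussDensity, h2π, hdet, Fintype.card_fin,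
    Real.sqrt_mul (show 0 ≤ (2 * π) ^ d by positivity), mul_inv]

lemma gaussDensity_nonneg (μ : n → ℝ) (S : Matrix n n ℝ) (x : n → ℝ) : 0 ≤ gaussDensity μ S x := by
  unfold gaussDensity
  positivity

lemma integral_gaussDensity (μ : n → ℝ) {S : Matrix n n ℝ} (hS : S.PosDef) :
    ∫ x, gaussDensity μ S x = 1 := by
  have hdet := hS.det_pos
  unfold gaussDensity
  rw [integral_const_mul, integral_exp_neg_half_dotProduct_mulVec hS.inv, det_nonsing_inv,
    Ring.inverse_eq_inv', div_inv_eq_mul]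
  exact inv_mul_cancel₀ (by positivity)

lemma integrable_gaussDensity (μ : n → ℝ) {S : Matrix n n ℝ} (hS : S.PosDef) :
    Integrable (gaussDensity μ S) :=
  .of_integral_ne_zero (by simp [integral_gaussDensity μ hS])

lemma sqrt_gaussDensity_mul_sqrt_gaussDensity (μ : n → ℝ) (S T : Matrix n n ℝ) (x : n → ℝ) :
    √(gaussDensity μ S x) * √(gaussDensity μ T x) =
      √((√((2 * π) ^ Fintype.card n * S.det))⁻¹ * (√((2 * π) ^ Fintype.card n * T.det))⁻¹) *
        Real.exp (-(1 / 2) * ((x - μ) ⬝ᵥ ((1 / 2 : ℝ) • (S⁻¹ + T⁻¹)) *ᵥ (x - μ))) := by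
  rw [← Real.sqrt_mul (gaussDensity_nonneg μ S x), gaussDensity, gaussDensity, mul_mul_mul_comm,
    Real.sqrt_mul (by positivity), ← Real.exp_add, ← Real.exp_half, smul_mulVec, add_mulVec,
    dotProduct_smul, dotProduct_add, smul_eq_mul]
  ring_nf

lemma det_half_smul_inv_add_inv {S T : Matrix n n ℝ} (hS : S.PosDef) (hT : T.PosDef) :
    ((1 / 2 : ℝ) • (S⁻¹ + T⁻¹)).det = ((1 / 2 : ℝ) • (S + T)).det / (S.det * T.det) := by
  rw [inv_add_inv (iff_of_true hS.isUnit hT.isUnit), det_smul, det_smul, det_mul, det_mul,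
    det_nonsing_inv, det_nonsing_inv, Ring.inverse_eq_inv']
  field_simp

lemma bhattacharyyaCoeff_gaussDensity_sq (μ : n → ℝ) {S T : Matrix n n ℝ} (hS : S.PosDef)
    (hT : T.PosDef) :
    bhattacharyyaCoeff volume (gaussDensity μ S) (gaussDensity μ T) ^ 2 =
      √(S.det * T.det) / ((1 / 2 : ℝ) • (S + T)).det := by
  have hSdet := hS.det_pos
  have hTdet := hT.det_pos
  have hmean : ((1 / 2 : ℝ) • (S + T)).PosDef := (hS.add hT).smul (by norm_num)
  have hmeanInv : ((1 / 2 : ℝ) • (S⁻¹ + T⁻¹)).PosDef := (hS.inv.add hT.inv).smul (by norm_num)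
  have hmean_det := hmean.det_pos
  have h2π : √((2 * π) ^ Fintype.card n) ^ 2 = (2 * π) ^ Fintype.card n :=
    Real.sq_sqrt (by positivity)
  simp_rw [bhattacharyyaCoeff, sqrt_gaussDensity_mul_sqrt_gaussDensity]
  rw [integral_const_mul, integral_exp_neg_half_dotProduct_mulVec hmeanInv,
    det_half_smul_inv_add_inv hS hT, mul_pow, Real.sq_sqrt (by positivity),
    Real.sq_sqrt (by positivity), Real.sqrt_mul (by positivity), Real.sqrt_mul (by positivity),
    Real.sqrt_mul hSdet.le]
  field_simp
  rw [h2π, Real.sq_sqrt hSdet.le, Real.sq_sqrt hTdet.le]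

lemma bhattacharyyaCoeff_gaussDensity_smul_sq (μ : n → ℝ) {S : Matrix n n ℝ} (hS : S.PosDef)
    {c₁ c₂ : ℝ} (hc₁ : 0 < c₁) (hc₂ : 0 < c₂) :
    bhattacharyyaCoeff volume (gaussDensity μ (c₁ • S)) (gaussDensity μ (c₂ • S)) ^ 2 =
      (√(c₁ * c₂) / ((c₁ + c₂) / 2)) ^ Fintype.card n := by
  have hdet := hS.det_pos
  have hsqrt : √((c₁ • S).det * (c₂ • S).det) = √(c₁ * c₂) ^ Fintype.card n * S.det := by
    rw [det_smul, det_smul, mul_mul_mul_comm, ← mul_pow, Real.sqrt_mul (by positivity),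
      sqrt_pow_of_nonneg (by positivity), Real.sqrt_mul_self hdet.le]
  have hmean : ((1 / 2 : ℝ) • (c₁ • S + c₂ • S)).det =
      ((c₁ + c₂) / 2) ^ Fintype.card n * S.det := by
    rw [← add_smul, smul_smul, det_smul, one_div_mul_eq_div]
  rw [bhattacharyyaCoeff_gaussDensity_sq μ (hS.smul hc₁) (hS.smul hc₂), hsqrt, hmean,
    mul_div_mul_right _ _ hdet.ne', ← div_pow]

end Gaussian

lemma one_sub_sqrt_mul_div_le {a b : ℝ} (ha : 0 < a) (hb : 0 < b) :
    1 - √(a * b) / ((a + b) / 2) ≤ (|a - b| / (a + b)) ^ 2 := by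
  have hgm : √(a * b) ^ 2 = a * b := Real.sq_sqrt (by positivity)
  have hle : √(a * b) / ((a + b) / 2) ≤ 1 := by
    rw [div_le_one (by positivity)]
    exact Real.sqrt_le_iff.2 ⟨by positivity, by nlinarith [sq_nonneg (a - b)]⟩
  calc 1 - √(a * b) / ((a + b) / 2)
      ≤ 1 - (√(a * b) / ((a + b) / 2)) ^ 2 := by
        gcongr
        exact pow_le_of_le_one (by positivity) hle two_ne_zero
    _ = (|a - b| / (a + b)) ^ 2 := by
        rw [div_pow, div_pow _ (a + b), hgm, sq_abs]
        field_simp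
        ring

lemma dTV_gaussMeasure_smul_le {d : ℕ} (μ : Fin d → ℝ) {S : Matrix (Fin d) (Fin d) ℝ}
    (hS : S.PosDef) {c₁ c₂ : ℝ} (hc₁ : 0 < c₁) (hc₂ : 0 < c₂) :
    dTV (gaussMeasure d μ (c₁ • S)) (gaussMeasure d μ (c₂ • S)) ≤
      |c₁ - c₂| / (c₁ + c₂) * √d := by
  have hS₁ := hS.smul hc₁
  have hS₂ := hS.smul hc₂
  set ρ := √(c₁ * c₂) / ((c₁ + c₂) / 2)
  have hρ0 : 0 ≤ ρ := by positivity
  rw [gaussMeasure_eq_withDensity μ hS₁, gaussMeasure_eq_withDensity μ hS₂]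
  calc _ ≤ √(1 - bhattacharyyaCoeff volume (gaussDensity μ (c₁ • S))
            (gaussDensity μ (c₂ • S)) ^ 2) :=
        dTV_withDensity_ofReal_le_sqrt_one_sub_sq (integrable_gaussDensity μ hS₁)
          (integrable_gaussDensity μ hS₂) (.of_forall (gaussDensity_nonneg μ _))
          (.of_forall (gaussDensity_nonneg μ _)) (integral_gaussDensity μ hS₁)
          (integral_gaussDensity μ hS₂)
    _ = √(1 - ρ ^ d) := by
        rw [bhattacharyyaCoeff_gaussDensity_smul_sq μ hS hc₁ hc₂, Fintype.card_fin]
    _ ≤ √((1 - ρ) * d) := by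
        gcongr
        linarith [one_add_mul_sub_le_pow (by linarith : -1 ≤ ρ) d]
    _ ≤ √((|c₁ - c₂| / (c₁ + c₂)) ^ 2 * d) := by
        gcongr
        exact one_sub_sqrt_mul_div_le hc₁ hc₂
    _ = |c₁ - c₂| / (c₁ + c₂) * √d := by
        rw [Real.sqrt_mul (sq_nonneg _), Real.sqrt_sq (by positivity)]

theorem gaussian_tv_proportional_covariances_general {d : ℕ} (μ : Fin d → ℝ)
    {S : Matrix (Fin d) (Fin d) ℝ} (hS : S.PosDef) {c₁ c₂ : ℝ} (hc₁ : 0 < c₁) (hc₂ : 0 < c₂) :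
    dTV (gaussMeasure d μ (c₁ • S)) (gaussMeasure d μ (c₂ • S)) ≤ |c₁ / c₂ - 1| * √d := by
  refine (dTV_gaussMeasure_smul_le μ hS hc₁ hc₂).trans ?_
  rw [div_sub_one hc₂.ne', abs_div, abs_of_pos hc₂]
  gcongr
  exact le_add_of_nonneg_left hc₁.le

theorem gaussian_tv_proportional_covariances :
    ∃ C > (0 : ℝ), ∀ (d : ℕ) (μ : Fin d → ℝ) (S : Matrix (Fin d) (Fin d) ℝ),
      S.PosDef → ∀ c₁ c₂ : ℝ, 0 < c₁ → 0 < c₂ → |c₁ / c₂ - 1| ≤ 1 / 2 →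
        dTV (gaussMeasure d μ (c₁ • S)) (gaussMeasure d μ (c₂ • S)) ≤
          C * |c₁ / c₂ - 1| * Real.sqrt d :=
  ⟨1, one_pos, fun _ μ _ hS _ _ hc₁ hc₂ _ => by
    simpa only [one_mul] using gaussian_tv_proportional_covariances_general μ hS hc₁ hc₂⟩
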